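/- arXiv:1810.04886 — 11 statements merged into one kernel-verified Lean document; each statement's English description precedes it below -/
import Mathlib

section
/- Let Γ = (A, R) be an AFRA and S ⊆ A ∪ R. If an attack α ∈ R is acceptable w.r.t. S, then src(α) is acceptable w.r.t. S. -/
/-- An Argumentation Framework with Recursive Attacks: a set (type) of
arguments, a set (type) of attacks, each attack having a source argument
and a target which is either an argument or an attack. -/
structure AFRA where
  Arg : Type
  Att : Type
  src : Att → Arg
  trg : Att → Arg ⊕ Att

namespace AFRA

/-- The elements of an AFRA: arguments and attacks. -/
abbrev El (Γ : AFRA) : Type := Γ.Arg ⊕ Γ.Att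

variable (Γ : AFRA)

/-- An attack `α` defeats `V` iff `V = trg α` (direct defeat) or `V` is an
attack whose source is `trg α` (indirect defeat). -/
def Defeats (α : Γ.Att) (V : Γ.El) : Prop :=
  V = Γ.trg α ∨ ∃ β : Γ.Att, V = Sum.inr β ∧ Γ.trg α = Sum.inl (Γ.src β)

/-- `W` is acceptable w.r.t. `S` iff every attack defeating `W` is defeated by
some attack in `S`. -/
def Acceptable (S : Set Γ.El) (W : Γ.El) : Prop :=
  ∀ α : Γ.Att, Γ.Defeats α W → ∃ β : Γ.Att, Sum.inr β ∈ S ∧ Γ.Defeats β (Sum.inr α)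

/-- `S` is conflict-free iff no element of `S` defeats another element of `S`. -/
def ConflictFree (S : Set Γ.El) : Prop :=
  ¬ ∃ α : Γ.Att, Sum.inr α ∈ S ∧ ∃ W ∈ S, Γ.Defeats α W

/-- The characteristic function of an AFRA. -/
def charFun (S : Set Γ.El) : Set Γ.El := {V | Γ.Acceptable S V}

/-- `S` is admissible iff it is conflict-free and all its elements are
acceptable w.r.t. `S`. -/
def Admissible (S : Set Γ.El) : Prop :=
  Γ.ConflictFree S ∧ ∀ V ∈ S, Γ.Acceptable S V

/-- `S` is a complete extension iff it is admissible and contains every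
element acceptable w.r.t. it. -/
def Complete (S : Set Γ.El) : Prop :=
  Γ.Admissible S ∧ ∀ V : Γ.El, Γ.Acceptable S V → V ∈ S

/-- `S` is a preferred extension iff it is a maximal admissible set. -/
def Preferred (S : Set Γ.El) : Prop :=
  Γ.Admissible S ∧ ∀ T : Set Γ.El, Γ.Admissible T → S ⊆ T → S = T

/-- `S` is a stable extension iff it is conflict-free and defeats every
element outside of it. -/
def Stable (S : Set Γ.El) : Prop :=
  Γ.ConflictFree S ∧ ∀ V : Γ.El, V ∉ S → ∃ α : Γ.Att, Sum.inr α ∈ S ∧ Γ.Defeats α V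

/-- The range of `S`: `S` together with everything defeated by `S`. -/
def range (S : Set Γ.El) : Set Γ.El :=
  S ∪ {V : Γ.El | ∃ α : Γ.Att, Sum.inr α ∈ S ∧ Γ.Defeats α V}

/-- `S` is a semi-stable extension iff it is a complete extension with
maximal range among complete extensions. -/
def SemiStable (S : Set Γ.El) : Prop :=
  Γ.Complete S ∧ ∀ T : Set Γ.El, Γ.Complete T → Γ.range S ⊆ Γ.range T → Γ.range T = Γ.range S

/-- `S` is ideal iff it is admissible and contained in every preferred
extension. -/
def Ideal (S : Set Γ.El) : Prop :=
  Γ.Admissible S ∧ ∀ P : Set Γ.El, Γ.Preferred P → S ⊆ P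

/-- An AFRA is an AF when every attack targets an argument. -/
def IsAF : Prop := ∀ α : Γ.Att, ∃ a : Γ.Arg, Γ.trg α = Sum.inl a

/-- The Dung attack relation between arguments. -/
def AttacksAF (a b : Γ.Arg) : Prop :=
  ∃ α : Γ.Att, Γ.src α = a ∧ Γ.trg α = Sum.inl b

/-- D-conflict-freeness of a set of arguments. -/
def DConflictFree (U : Set Γ.Arg) : Prop :=
  ¬ ∃ a ∈ U, ∃ b ∈ U, Γ.AttacksAF a b

/-- D-acceptability of an argument w.r.t. a set of arguments. -/
def DAcceptable (U : Set Γ.Arg) (a : Γ.Arg) : Prop :=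
  ∀ b : Γ.Arg, Γ.AttacksAF b a → ∃ c ∈ U, Γ.AttacksAF c b

/-- The D-characteristic function on sets of arguments. -/
def dCharFun (U : Set Γ.Arg) : Set Γ.Arg := {a | Γ.DAcceptable U a}

/-- D-admissibility of a set of arguments. -/
def DAdmissible (U : Set Γ.Arg) : Prop :=
  Γ.DConflictFree U ∧ ∀ a ∈ U, Γ.DAcceptable U a

/-- D-complete extensions. -/
def DComplete (U : Set Γ.Arg) : Prop :=
  Γ.DAdmissible U ∧ ∀ a : Γ.Arg, Γ.DAcceptable U a → a ∈ U

/-- D-preferred extensions: maximal D-admissible sets. -/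
def DPreferred (U : Set Γ.Arg) : Prop :=
  Γ.DAdmissible U ∧ ∀ W : Set Γ.Arg, Γ.DAdmissible W → U ⊆ W → U = W

/-- The operator completing a set of arguments with all attacks arising
from it. -/
def Ext (U : Set Γ.Arg) : Set Γ.El :=
  (Sum.inl '' U) ∪ (Sum.inr '' {α : Γ.Att | Γ.src α ∈ U})

end AFRA

/-- If an attack is acceptable w.r.t. `S`, then its source is acceptable
w.r.t. `S`. -/
theorem stmt_0 (Γ : AFRA) (S : Set Γ.El) (α : Γ.Att)
    (h : Γ.Acceptable S (Sum.inr α)) :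
    Γ.Acceptable S (Sum.inl (Γ.src α)) := by
  intro β hβ
  refine h β ?_
  rcases hβ with hβ | ⟨γ, hγ, _⟩
  -- An attack aimed directly at the source of `α` defeats `α` indirectly.
  · exact Or.inr ⟨α, rfl, hβ.symm⟩
  -- Indirect defeat only ever hits attacks, never an argument.
  · exact absurd hγ Sum.inl_ne_inr
end

section
/- Let Γ = (A, R) be an AFRA. If S ⊆ A ∪ R is conflict-free, then F_Γ(S) is also conflict-free. -/
/-- The characteristic function preserves conflict-freeness. -/
theorem stmt_1 (Γ : AFRA) (S : Set Γ.El) (h : Γ.ConflictFree S) :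
    Γ.ConflictFree (Γ.charFun S) := by
  rintro ⟨α, hα, W, hW, hαW⟩
  -- `W` is defended against `α` by some `β ∈ S`, and `α` against `β` by some `γ ∈ S`,
  -- so `γ` and `β` conflict inside `S`.
  obtain ⟨β, hβ, hβα⟩ := hW α hαW
  obtain ⟨γ, hγ, hγβ⟩ := hα β hβα
  exact h ⟨γ, hγ, Sum.inr β, hβ, hγβ⟩
end

section
/- (Fundamental lemma, part 1) Let Γ = (A, R) be an AFRA, S ⊆ A ∪ R an admissible set, and V ∈ A ∪ R an element acceptable w.r.t. S. Then S ∪ {V} is admissible. -/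
namespace AFRA

theorem Acceptable.mono {Γ : AFRA} {S T : Set Γ.El} {W : Γ.El} (hW : Γ.Acceptable S W)
    (hST : S ⊆ T) : Γ.Acceptable T W := fun α hα =>
  let ⟨β, hβ, hβα⟩ := hW α hα
  ⟨β, hST hβ, hβα⟩

theorem Admissible.not_defeats {Γ : AFRA} {S : Set Γ.El} {W : Γ.El} {β : Γ.Att}
    (hS : Γ.Admissible S) (hW : Γ.Acceptable S W) (hβ : Sum.inr β ∈ S) :
    ¬ Γ.Defeats β W := fun hβW =>
  let ⟨γ, hγ, hγβ⟩ := hW β hβW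
  hS.1 ⟨γ, hγ, Sum.inr β, hβ, hγβ⟩

end AFRA

/-- Fundamental lemma, part 1: adding an acceptable element to an admissible
set preserves admissibility. -/
theorem stmt_3 (Γ : AFRA) (S : Set Γ.El) (V : Γ.El)
    (hS : Γ.Admissible S) (hV : Γ.Acceptable S V) :
    Γ.Admissible (S ∪ {V}) := by
  have hacc : ∀ W ∈ S ∪ {V}, Γ.Acceptable S W := by
    rintro W (hW | rfl)
    · exact hS.2 W hW
    · exact hV
  refine ⟨?_, fun W hW => (hacc W hW).mono Set.subset_union_left⟩
  rintro ⟨α, hα, W, hW, hαW⟩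
  obtain ⟨β, hβ, hβα⟩ := hacc W hW α hαW
  exact hS.not_defeats (hacc _ hα) hβ hβα
end

section
/- Let Γ = (A, R) be an AFRA. The grounded extension of Γ (the least fixed point of the characteristic function F_Γ) is the least complete extension of Γ: it is a complete extension and is contained in every complete extension. -/
namespace AFRA

theorem charFun_mono (Γ : AFRA) : Monotone Γ.charFun := by
  intro S T hST V hV α hα
  obtain ⟨β, hβ, hd⟩ := hV α hα
  exact ⟨β, hST hβ, hd⟩

/-- A set contained in every fixed point of the characteristic function is contained in every
prefixed point (Knaster–Tarski). -/
theorem subset_of_charFun_subset (Γ : AFRA) {S T : Set Γ.El}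
    (hleast : ∀ T : Set Γ.El, Γ.charFun T = T → S ⊆ T) (hT : Γ.charFun T ⊆ T) : S ⊆ T := by
  let F : Set Γ.El →o Set Γ.El := ⟨Γ.charFun, Γ.charFun_mono⟩
  have h₁ : S ⊆ F.lfp := hleast _ F.map_lfp
  have h₂ : F.lfp ≤ T := F.lfp_le hT
  exact h₁.trans h₂

theorem conflictFree_of_least_fixed (Γ : AFRA) {S : Set Γ.El} (hfix : Γ.charFun S = S)
    (hleast : ∀ T : Set Γ.El, Γ.charFun T = T → S ⊆ T) : Γ.ConflictFree S := by
  have hS : S ⊆ {V | V ∈ S ∧ ∀ α : Γ.Att, Sum.inr α ∈ S → ¬ Γ.Defeats α V} := by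
    refine Γ.subset_of_charFun_subset hleast fun V hV => ⟨?_, fun α hα hd => ?_⟩
    · rw [← hfix]
      exact Γ.charFun_mono (fun _ h => h.1) hV
    · obtain ⟨β, ⟨-, hβ⟩, hβα⟩ := hV α hd
      have hacc : Sum.inr α ∈ Γ.charFun S := hfix.symm ▸ hα
      obtain ⟨γ, hγ, hγβ⟩ := hacc β hβα
      exact hβ γ hγ hγβ
  rintro ⟨α, hα, W, hW, hd⟩
  exact (hS hW).2 α hα hd

end AFRA

/-- The grounded extension (least fixed point of the characteristic function)
is the least complete extension. -/
theorem stmt_6 (Γ : AFRA) (S : Set Γ.El)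
    (hfix : Γ.charFun S = S)
    (hleast : ∀ T : Set Γ.El, Γ.charFun T = T → S ⊆ T) :
    Γ.Complete S ∧ ∀ T : Set Γ.El, Γ.Complete T → S ⊆ T := by
  refine ⟨⟨⟨Γ.conflictFree_of_least_fixed hfix hleast, fun V hV => ?_⟩, fun V hV => ?_⟩,
    fun T hT => hleast T (Set.Subset.antisymm hT.2 hT.1.2)⟩
  · exact (hfix.symm ▸ hV : V ∈ Γ.charFun S)
  · exact hfix ▸ (hV : V ∈ Γ.charFun S)
end

section
/- Let Γ = (A, R) be an AFRA. For each admissible set S of Γ there exists a preferred extension E of Γ such that S ⊆ E. -/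
/-- The union of a chain of admissible sets is admissible. A conflict in the union
involves only two elements, which lie together in the larger of two members of the
chain; acceptability w.r.t. a member passes to the union because it is monotone in the
defending set. -/
theorem AFRA.admissible_sUnion (Γ : AFRA) {c : Set (Set Γ.El)}
    (hadm : ∀ T ∈ c, Γ.Admissible T) (hc : IsChain (· ⊆ ·) c) :
    Γ.Admissible (⋃₀ c) := by
  refine ⟨?_, ?_⟩
  · rintro ⟨α, ⟨T, hT, hαT⟩, W, ⟨U, hU, hWU⟩, hαW⟩
    rcases hc.total hT hU with h | h
    · exact (hadm U hU).1 ⟨α, h hαT, W, hWU, hαW⟩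
    · exact (hadm T hT).1 ⟨α, hαT, W, h hWU, hαW⟩
  · rintro V ⟨T, hT, hVT⟩ α hα
    obtain ⟨β, hβ, hβα⟩ := (hadm T hT).2 V hVT α hα
    exact ⟨β, ⟨T, hT, hβ⟩, hβα⟩

/-- Every admissible set is contained in a preferred extension. -/
theorem stmt_7 (Γ : AFRA) (S : Set Γ.El) (hS : Γ.Admissible S) :
    ∃ E : Set Γ.El, Γ.Preferred E ∧ S ⊆ E := by
  obtain ⟨E, hSE, hE⟩ := zorn_subset_nonempty {T | Γ.Admissible T}
    (fun c hadm hc _ => ⟨⋃₀ c, Γ.admissible_sUnion hadm hc, fun _ => Set.subset_sUnion_of_mem⟩)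
    S hS
  exact ⟨E, ⟨hE.prop, fun _ hT hET => hE.eq_of_subset hT hET⟩, hSE⟩
end

section
/- Let Γ = (A, R) be an AFRA. Every preferred extension of Γ is a complete extension of Γ. -/
theorem AFRA.Acceptable.mono_s9 {Γ : AFRA} {S T : Set Γ.El} (hST : S ⊆ T) {V : Γ.El}
    (h : Γ.Acceptable S V) : Γ.Acceptable T V := fun α hα =>
  let ⟨β, hβ, hd⟩ := h α hα
  ⟨β, hST hβ, hd⟩

/-- If `α` and `W` are acceptable w.r.t. `S` and `α` defeats `W`, some `β ∈ S` defeats `α`, hence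
some `γ ∈ S` defeats `β`: a conflict inside `S`. So `charFun S` is conflict-free when `S` is. -/
theorem AFRA.ConflictFree.charFun {Γ : AFRA} {S : Set Γ.El} (h : Γ.ConflictFree S) :
    Γ.ConflictFree (Γ.charFun S) := by
  rintro ⟨α, hα, W, hW, hαW⟩
  obtain ⟨β, hβ, hβα⟩ := hW α hαW
  obtain ⟨γ, hγ, hγβ⟩ := hα β hβα
  exact h ⟨γ, hγ, Sum.inr β, hβ, hγβ⟩

theorem AFRA.Admissible.charFun {Γ : AFRA} {S : Set Γ.El} (h : Γ.Admissible S) :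
    Γ.Admissible (Γ.charFun S) :=
  ⟨h.1.charFun, fun _ hV => AFRA.Acceptable.mono_s9 h.2 hV⟩

/-- Every preferred extension is a complete extension. -/
theorem stmt_9 (Γ : AFRA) (S : Set Γ.El) (h : Γ.Preferred S) :
    Γ.Complete S := by
  have hS : S = Γ.charFun S := h.2 _ h.1.charFun h.1.2
  exact ⟨h.1, fun V hV => hS.symm.subset hV⟩
end

section
/- Let Γ = (A, R) be an AFRA. Every stable extension of Γ is a preferred extension of Γ. -/
/-- Every stable extension is a preferred extension. -/
theorem stmt_10 (Γ : AFRA) (S : Set Γ.El) (h : Γ.Stable S) :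
    Γ.Preferred S := by
  obtain ⟨hcf, hst⟩ := h
  refine ⟨⟨hcf, fun V hV α hα => ?_⟩, fun T hT hST => hST.antisymm fun V hV => ?_⟩
  · -- An attacker of a member of `S` lies outside `S`, so `S` defeats it.
    exact hst (Sum.inr α) fun hαS => hcf ⟨α, hαS, V, hV, hα⟩
  · -- A new element of `T ⊇ S` would be defeated by `S`, hence by `T` itself.
    by_contra hVS
    obtain ⟨α, hα, hd⟩ := hst V hVS
    exact hT.1 ⟨α, hST hα, V, hV, hd⟩
end

section
/- Let Γ = (A, R) be an AFRA. If Γ has at least one stable extension, then the stable extensions of Γ coincide with the semi-stable extensions of Γ: a set S ⊆ A ∪ R is stable iff it is semi-stable. -/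
namespace AFRA

/-- Stability is conflict-freeness together with full range. -/
theorem stable_iff_range_eq_univ (Γ : AFRA) (S : Set Γ.El) :
    Γ.Stable S ↔ Γ.ConflictFree S ∧ Γ.range S = Set.univ := by
  simp only [Stable, range, Set.eq_univ_iff_forall, Set.mem_union, Set.mem_ofPred_eq,
    or_iff_not_imp_left]

/-- In a stable set, an attack defeating a member lies outside the set and so is itself defeated;
an acceptable element outside the set would be defeated by a member that the set also defeats. -/
theorem Stable.complete {Γ : AFRA} {S : Set Γ.El} (h : Γ.Stable S) : Γ.Complete S := by
  obtain ⟨hcf, hdef⟩ := h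
  refine ⟨⟨hcf, fun V hV α hα => hdef _ fun hαS => hcf ⟨α, hαS, V, hV, hα⟩⟩, fun V hacc => ?_⟩
  by_contra hV
  obtain ⟨α, hαS, hα⟩ := hdef V hV
  obtain ⟨β, hβS, hβ⟩ := hacc α hα
  exact hcf ⟨β, hβS, _, hαS, hβ⟩

end AFRA

/-- If stable extensions exist, then they coincide with the semi-stable
extensions. -/
theorem stmt_12 (Γ : AFRA) (hex : ∃ S : Set Γ.El, Γ.Stable S) :
    ∀ S : Set Γ.El, Γ.Stable S ↔ Γ.SemiStable S := by
  obtain ⟨T, hT⟩ := hex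
  have hTr := ((Γ.stable_iff_range_eq_univ T).1 hT).2
  intro S
  constructor
  · intro hS
    have hSr := ((Γ.stable_iff_range_eq_univ S).1 hS).2
    exact ⟨hS.complete, fun U _ hle => Set.Subset.antisymm (hSr ▸ Set.subset_univ _) hle⟩
  · rintro ⟨hS, hmax⟩
    have hr : Γ.range T = Γ.range S := hmax T hT.complete (hTr ▸ Set.subset_univ _)
    exact (Γ.stable_iff_range_eq_univ S).2 ⟨hS.1.1, hr ▸ hTr⟩
end

section
/- Let Γ = (A, R) be an AFRA which is an AF (i.e. trg(α) ∈ A for every α ∈ R) and S ⊆ A ∪ R. If an argument a ∈ A is acceptable w.r.t. S, then every attack α ∈ R with src(α) = a is acceptable w.r.t. S. -/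
/-- In an AF, if an argument is acceptable w.r.t. `S` then every attack
originating from it is acceptable w.r.t. `S`. -/
theorem stmt_15 (Γ : AFRA) (hAF : Γ.IsAF) (S : Set Γ.El) (a : Γ.Arg)
    (h : Γ.Acceptable S (Sum.inl a)) :
    ∀ α : Γ.Att, Γ.src α = a → Γ.Acceptable S (Sum.inr α) := by
  rintro α rfl γ hγ
  refine h γ (Or.inl ?_)
  rcases hγ with hdirect | ⟨β, hβ, htrg⟩
  -- A direct defeat of an attack is impossible, since every target is an argument.
  · obtain ⟨b, hb⟩ := hAF γ
    rw [hb] at hdirect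
    cases hdirect
  -- An indirect defeat of `α` is a direct defeat of its source.
  · cases hβ
    exact htrg.symm
end

section
/- Let Γ = (A, R) be an AFRA which is an AF (i.e. trg(α) ∈ A for every α ∈ R). Then S ⊆ A ∪ R is a complete extension of Γ (in the AFRA sense) iff S = Ext(U) for some D-complete extension U ⊆ A of Γ. -/
namespace AFRA

variable {Γ : AFRA}

theorem inl_mem_ext {U : Set Γ.Arg} {a : Γ.Arg} : (Sum.inl a : Γ.El) ∈ Γ.Ext U ↔ a ∈ U := by
  simp [Ext]

theorem inr_mem_ext {U : Set Γ.Arg} {α : Γ.Att} :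
    (Sum.inr α : Γ.El) ∈ Γ.Ext U ↔ Γ.src α ∈ U := by
  simp [Ext]

theorem defeats_inl_iff {α : Γ.Att} {a : Γ.Arg} :
    Γ.Defeats α (Sum.inl a) ↔ Γ.trg α = Sum.inl a := by
  simp [Defeats, eq_comm]

/-- In an AF there is no direct defeat of attacks, so defeating an attack means targeting its
source. -/
theorem defeats_inr_iff (hAF : Γ.IsAF) {α β : Γ.Att} :
    Γ.Defeats α (Sum.inr β) ↔ Γ.trg α = Sum.inl (Γ.src β) := by
  obtain ⟨a, ha⟩ := hAF α
  simp [Defeats, ha]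

theorem acceptable_inr_iff (hAF : Γ.IsAF) {S : Set Γ.El} {β : Γ.Att} :
    Γ.Acceptable S (Sum.inr β) ↔ Γ.Acceptable S (Sum.inl (Γ.src β)) := by
  simp only [Acceptable, defeats_inr_iff hAF, defeats_inl_iff]

theorem acceptable_ext_inl_iff (hAF : Γ.IsAF) {U : Set Γ.Arg} {a : Γ.Arg} :
    Γ.Acceptable (Γ.Ext U) (Sum.inl a) ↔ Γ.DAcceptable U a := by
  simp only [Acceptable, DAcceptable, AttacksAF, defeats_inr_iff hAF, defeats_inl_iff,
    inr_mem_ext]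
  constructor
  · rintro h _ ⟨α, rfl, hα⟩
    obtain ⟨β, hβ, hβα⟩ := h α hα
    exact ⟨_, hβ, β, rfl, hβα⟩
  · intro h α hα
    obtain ⟨_, hc, β, rfl, hβα⟩ := h _ ⟨α, rfl, hα⟩
    exact ⟨β, hc, hβα⟩

theorem conflictFree_ext_iff (hAF : Γ.IsAF) {U : Set Γ.Arg} :
    Γ.ConflictFree (Γ.Ext U) ↔ Γ.DConflictFree U := by
  refine not_congr ⟨?_, ?_⟩
  · rintro ⟨α, hα, b | β, hW, hd⟩
    · exact ⟨_, inr_mem_ext.1 hα, b, inl_mem_ext.1 hW, α, rfl, defeats_inl_iff.1 hd⟩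
    · exact ⟨_, inr_mem_ext.1 hα, _, inr_mem_ext.1 hW, α, rfl, (defeats_inr_iff hAF).1 hd⟩
  · rintro ⟨_, ha, b, hb, α, rfl, hα⟩
    exact ⟨α, inr_mem_ext.2 ha, Sum.inl b, inl_mem_ext.2 hb, defeats_inl_iff.2 hα⟩

theorem complete_ext_iff (hAF : Γ.IsAF) {U : Set Γ.Arg} :
    Γ.Complete (Γ.Ext U) ↔ Γ.DComplete U := by
  simp only [Complete, Admissible, DComplete, DAdmissible, conflictFree_ext_iff hAF, Sum.forall,
    inl_mem_ext, inr_mem_ext, acceptable_inr_iff hAF, acceptable_ext_inl_iff hAF]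
  -- The clauses about attacks are those about arguments, specialized to sources.
  grind

theorem Complete.mem_iff {S : Set Γ.El} (hS : Γ.Complete S) (V : Γ.El) :
    V ∈ S ↔ Γ.Acceptable S V :=
  ⟨hS.1.2 V, hS.2 V⟩

theorem Complete.eq_ext (hAF : Γ.IsAF) {S : Set Γ.El} (hS : Γ.Complete S) :
    S = Γ.Ext (Sum.inl ⁻¹' S) := by
  ext (a | β)
  · rw [inl_mem_ext, Set.mem_preimage]
  · rw [inr_mem_ext, Set.mem_preimage, hS.mem_iff, hS.mem_iff, acceptable_inr_iff hAF]

end AFRA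

/-- In an AF, complete extensions in the AFRA sense correspond bijectively,
via `Ext`, to D-complete extensions. -/
theorem stmt_17 (Γ : AFRA) (hAF : Γ.IsAF) (S : Set Γ.El) :
    Γ.Complete S ↔ ∃ U : Set Γ.Arg, Γ.DComplete U ∧ S = Γ.Ext U := by
  constructor
  · intro hS
    have h := hS.eq_ext hAF
    exact ⟨_, (AFRA.complete_ext_iff hAF).1 (h ▸ hS), h⟩
  · rintro ⟨U, hU, rfl⟩
    exact (AFRA.complete_ext_iff hAF).2 hU
end

section
/- Let Γ = (A, R) be an AFRA which is an AF (i.e. trg(α) ∈ A for every α ∈ R). Then S ⊆ A ∪ R is a preferred extension of Γ (in the AFRA sense) iff S = Ext(U) for some D-preferred extension U ⊆ A of Γ. -/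
namespace AFRA

/-- The underlying argument of an element: an argument itself, or the source of an attack. -/
def base (Γ : AFRA) : Γ.El → Γ.Arg
  | Sum.inl a => a
  | Sum.inr α => Γ.src α

theorem mem_ext_iff (Γ : AFRA) (U : Set Γ.Arg) (V : Γ.El) : V ∈ Γ.Ext U ↔ Γ.base V ∈ U := by
  rcases V with a | α <;> simp [Ext, base]

theorem defeats_iff (Γ : AFRA) (hAF : Γ.IsAF) (α : Γ.Att) (V : Γ.El) :
    Γ.Defeats α V ↔ Γ.trg α = Sum.inl (Γ.base V) := by
  obtain ⟨t, ht⟩ := hAF α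
  rcases V with a | β <;> simp [Defeats, base, ht, eq_comm]

theorem admissible_ext (Γ : AFRA) (hAF : Γ.IsAF) {U : Set Γ.Arg} (hU : Γ.DAdmissible U) :
    Γ.Admissible (Γ.Ext U) := by
  constructor
  · rintro ⟨α, hα, V, hV, h⟩
    rw [mem_ext_iff] at hα hV
    exact hU.1 ⟨_, hα, _, hV, α, rfl, (Γ.defeats_iff hAF α V).1 h⟩
  · intro V hV α h
    rw [mem_ext_iff] at hV
    obtain ⟨c, hc, β, rfl, hβ⟩ := hU.2 _ hV _ ⟨α, rfl, (Γ.defeats_iff hAF α V).1 h⟩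
    exact ⟨β, (Γ.mem_ext_iff U _).2 hc, (Γ.defeats_iff hAF β _).2 hβ⟩

theorem dAdmissible_image (Γ : AFRA) (hAF : Γ.IsAF) {S : Set Γ.El} (hS : Γ.Admissible S) :
    Γ.DAdmissible (Γ.base '' S) := by
  constructor
  · rintro ⟨_, ⟨V, hV, rfl⟩, _, ⟨W, hW, rfl⟩, α, hα, h⟩
    -- `α` need not lie in `S`, but `S` defends `W` against it by an attack `β` on its source,
    -- and `β` then defeats `V`.
    obtain ⟨β, hβ, hd⟩ := hS.2 W hW α ((Γ.defeats_iff hAF α W).2 h)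
    refine hS.1 ⟨β, hβ, V, hV, (Γ.defeats_iff hAF β V).2 ?_⟩
    rw [← hα]
    exact (Γ.defeats_iff hAF β _).1 hd
  · rintro _ ⟨V, hV, rfl⟩ _ ⟨α, rfl, h⟩
    obtain ⟨β, hβ, hd⟩ := hS.2 V hV α ((Γ.defeats_iff hAF α V).2 h)
    exact ⟨_, ⟨_, hβ, rfl⟩, β, rfl, (Γ.defeats_iff hAF β _).1 hd⟩

theorem subset_ext_iff (Γ : AFRA) (S : Set Γ.El) (U : Set Γ.Arg) :
    S ⊆ Γ.Ext U ↔ Γ.base '' S ⊆ U := by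
  rw [Set.image_subset_iff]
  exact forall₂_congr fun V _ => Γ.mem_ext_iff U V

theorem image_ext (Γ : AFRA) (U : Set Γ.Arg) : Γ.base '' Γ.Ext U = U :=
  ((Γ.subset_ext_iff _ _).1 subset_rfl).antisymm
    fun a ha => ⟨Sum.inl a, (Γ.mem_ext_iff U _).2 ha, rfl⟩

end AFRA

/-- In an AF, preferred extensions in the AFRA sense correspond bijectively,
via `Ext`, to D-preferred extensions. -/
theorem stmt_18 (Γ : AFRA) (hAF : Γ.IsAF) (S : Set Γ.El) :
    Γ.Preferred S ↔ ∃ U : Set Γ.Arg, Γ.DPreferred U ∧ S = Γ.Ext U := by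
  constructor
  · rintro ⟨hS, hmax⟩
    have hD := Γ.dAdmissible_image hAF hS
    refine ⟨Γ.base '' S, ⟨hD, fun W hW hSW => ?_⟩,
      hmax _ (Γ.admissible_ext hAF hD) ((Γ.subset_ext_iff _ _).2 subset_rfl)⟩
    rw [hmax _ (Γ.admissible_ext hAF hW) ((Γ.subset_ext_iff _ _).2 hSW), Γ.image_ext]
  · rintro ⟨U, ⟨hU, hmax⟩, rfl⟩
    refine ⟨Γ.admissible_ext hAF hU, fun T hT hUT => hUT.antisymm ?_⟩
    rw [Γ.subset_ext_iff, ← hmax _ (Γ.dAdmissible_image hAF hT)]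
    rw [← Γ.image_ext U]
    exact Set.image_mono hUT
end
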